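/- Let α > 0 with α ∉ ℕ, d ≥ 1, ℓ = ⌊α⌋⁻, m = C(ℓ+d, ℓ), and fix constants c_L ≥ c_d > 0 and c_N > 0. There is a constant C > 0 depending only on α, d, c_d, c_L and c_N such that the following holds. Let L ∈ (0, 1], let x ∈ ℝ^d, and let A ⊂ ℝ^d be a set of m points satisfying the geometric hypotheses at scale L with constants c_L, c_d, c_N. Then for every τ > 0 and every c ∈ [−1, 1], the Matérn kernel matrix K_{τA,τA} is invertible and |c − c · 𝟙ᵀ (K_{τA,τA})⁻¹ K_{τA,τx}| ≤ C |c| (τL)^α, where 𝟙 ∈ ℝ^m is the all-ones vector; that is, interpolating the constant function c from τA to τx via the Matérn kernel incurs error at most C |c| (τL)^α. -/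

import Mathlib

open Matrix MeasureTheory

noncomputable section

/-- The Matérn function with regularity `α` on ℝ^d (Fourier normalization):
`K_α(x) = ∫ cos⟨x,ξ⟩ (1+‖ξ‖₂²)^{-(α+d/2)} dξ`. -/
def matern (α : ℝ) (d : ℕ) (x : Fin d → ℝ) : ℝ :=
  ∫ ξ : Fin d → ℝ, Real.cos (∑ j, x j * ξ j) * (1 + ∑ j, ξ j ^ 2) ^ (-(α + (d : ℝ) / 2))

/-- `⌊α⌋⁻`, the largest integer strictly smaller than `α` (for `α > 0`). -/
def lbelow (α : ℝ) : ℕ := Nat.ceil α - 1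

/-- `α` is a (nonnegative) integer. -/
def IsNatVal (α : ℝ) : Prop := ∃ n : ℕ, α = n

/-- The Euclidean norm `‖x‖₂` on ℝ^d. -/
def nrm {d : ℕ} (x : Fin d → ℝ) : ℝ := Real.sqrt (∑ j, x j ^ 2)

/-- Partial derivative in the `j`-th coordinate. -/
def pder (d : ℕ) (j : Fin d) (f : (Fin d → ℝ) → ℝ) : (Fin d → ℝ) → ℝ :=
  fun x => fderiv ℝ f x (Pi.single j 1)

/-- The iterated partial derivative `∂^k` associated with a multi-index `k ∈ ℕ^d`. -/
def mder (d : ℕ) (k : Fin d → ℕ) (f : (Fin d → ℝ) → ℝ) : (Fin d → ℝ) → ℝ :=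
  (List.finRange d).foldr (fun j g => (pder d j)^[k j] g) f

/-- Mixed derivative `F^{(k₁,k₂)}(x₁,x₂) = ∂^{k₁}_{x₁} ∂^{k₂}_{x₂} F(x₁,x₂)`. -/
def mder2 (d : ℕ) (k₁ k₂ : Fin d → ℕ) (F : (Fin d → ℝ) → (Fin d → ℝ) → ℝ)
    (x₁ x₂ : Fin d → ℝ) : ℝ :=
  mder d k₁ (fun y => mder d k₂ (F y) x₂) x₁

/-- The Matérn kernel matrix `K_{A,A} = (K(w_i, w_j))_{i,j}`. -/
def maternMat (α : ℝ) (d : ℕ) {n : ℕ} (w : Fin n → Fin d → ℝ) :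
    Matrix (Fin n) (Fin n) ℝ :=
  Matrix.of fun i j => matern α d (w i - w j)

/-- The Matérn kernel column vector `K_{A,x} = (K(w_i, x))_i`. -/
def maternVec (α : ℝ) (d : ℕ) {n : ℕ} (w : Fin n → Fin d → ℝ) (x : Fin d → ℝ) :
    Fin n → ℝ :=
  fun i => matern α d (w i - x)

/-- The conditional kernel `K̃(x₁,x₂) = K(x₁,x₂) − K_{x₁,A} K_{A,A}⁻¹ K_{A,x₂}`. -/
def condK (α : ℝ) (d : ℕ) {n : ℕ} (w : Fin n → Fin d → ℝ) (x₁ x₂ : Fin d → ℝ) : ℝ :=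
  matern α d (x₁ - x₂) -
    maternVec α d w x₁ ⬝ᵥ ((maternMat α d w)⁻¹ *ᵥ maternVec α d w x₂)

/-- The unit cube `[0,1]^d`. -/
def unitCube (d : ℕ) : Set (Fin d → ℝ) := {x | ∀ t, 0 ≤ x t ∧ x t ≤ 1}

/-- `A = {w_1,…,w_m}` is a norming set for `𝒫_l(Ω)` with norming constant `c`. -/
def IsNorming {d : ℕ} (l : ℕ) (Ω : Set (Fin d → ℝ)) {m : ℕ}
    (w : Fin m → Fin d → ℝ) (c : ℝ) : Prop :=
  ∀ P : MvPolynomial (Fin d) ℝ, P.totalDegree ≤ l →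
    ∀ x ∈ Ω, |MvPolynomial.eval x P| ≤ c * ⨆ i : Fin m, |MvPolynomial.eval (w i) P|

/-- Axis-parallel cube with corner `z` and side length `s`. -/
def cube (d : ℕ) (z : Fin d → ℝ) (s : ℝ) : Set (Fin d → ℝ) :=
  {y | ∀ t, z t ≤ y t ∧ y t ≤ z t + s}

/-- Geometric hypotheses at scale `L` with constants `c_L, c_d, c_N`: `A ∪ {x}` lies in an
axis-parallel cube of side length at most `c_L·L`, the points `w_1,…,w_m, x` are pairwise at
`‖·‖_∞`-distance at least `c_d·L`, and `A` is a norming set for `𝒫_{⌊α⌋⁻}` of that cube with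
norming constant `c_N`. -/
def GeomHyp (α : ℝ) (d : ℕ) (cL cd cN L : ℝ) {m : ℕ}
    (w : Fin m → Fin d → ℝ) (x : Fin d → ℝ) : Prop :=
  ∃ z : Fin d → ℝ, ∃ s : ℝ, 0 ≤ s ∧ s ≤ cL * L ∧
    (∀ i, w i ∈ cube d z s) ∧ x ∈ cube d z s ∧
    (∀ i j, i ≠ j → ∃ t, cd * L ≤ |w i t - w j t|) ∧
    (∀ i, ∃ t, cd * L ≤ |w i t - x t|) ∧
    IsNorming (lbelow α) (cube d z s) w cN

/-- The spectral density of the Matérn kernel. -/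
def maternWeight (α : ℝ) (d : ℕ) (ξ : Fin d → ℝ) : ℝ :=
  (1 + ∑ j, ξ j ^ 2) ^ (-(α + (d : ℝ) / 2))

/-- The exponential sum `∑ v_i exp(i ⟨y_i, ξ⟩)`. -/
def expSum {d : ℕ} {ι : Type*} [Fintype ι] (v : ι → ℝ) (y : ι → Fin d → ℝ) (ξ : Fin d → ℝ) : ℂ :=
  ∑ i, (v i : ℂ) * Complex.exp ((y i ⬝ᵥ ξ : ℝ) * Complex.I)

/-- The Matérn quadratic form of the weights `v` at the points `y`. -/
def maternQuad (α : ℝ) (d : ℕ) {ι : Type*} [Fintype ι] (v : ι → ℝ) (y : ι → Fin d → ℝ) : ℝ :=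
  ∑ i, ∑ j, v i * v j * matern α d (y i - y j)

theorem norm_sq_le_sum_sq {d : ℕ} (ξ : Fin d → ℝ) : ‖ξ‖ ^ 2 ≤ ∑ j, ξ j ^ 2 := by
  have h : ‖ξ‖ ≤ √(∑ j, ξ j ^ 2) := by
    refine (pi_norm_le_iff_of_nonneg (Real.sqrt_nonneg _)).2 fun j => ?_
    rw [Real.norm_eq_abs]
    exact Real.abs_le_sqrt
      (Finset.single_le_sum (f := fun j => ξ j ^ 2) (fun i _ => sq_nonneg _) (Finset.mem_univ j))
  calc ‖ξ‖ ^ 2 ≤ √(∑ j, ξ j ^ 2) ^ 2 := by gcongr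
    _ = _ := Real.sq_sqrt (Finset.sum_nonneg fun i _ => sq_nonneg _)

theorem maternWeight_pos (α : ℝ) {d : ℕ} (ξ : Fin d → ℝ) : 0 < maternWeight α d ξ := by
  unfold maternWeight
  have : 0 ≤ ∑ j, ξ j ^ 2 := Finset.sum_nonneg fun i _ => sq_nonneg _
  positivity

theorem continuous_maternWeight (α : ℝ) (d : ℕ) : Continuous (maternWeight α d) := by
  unfold maternWeight
  refine Continuous.rpow_const (by fun_prop) fun ξ => Or.inl ?_
  have : 0 ≤ ∑ j, ξ j ^ 2 := Finset.sum_nonneg fun i _ => sq_nonneg _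
  positivity

theorem integrable_maternWeight {α : ℝ} (hα : 0 < α) (d : ℕ) :
    Integrable (maternWeight α d) := by
  have h := integrable_rpow_neg_one_add_norm_sq (E := Fin d → ℝ) (μ := volume) (r := 2 * α + d)
    (by simp; linarith)
  refine h.mono' (continuous_maternWeight α d).aestronglyMeasurable (.of_forall fun ξ => ?_)
  rw [Real.norm_of_nonneg (maternWeight_pos α ξ).le, maternWeight,
    show -(2 * α + (d : ℝ)) / 2 = -(α + (d : ℝ) / 2) by ring]
  refine Real.rpow_le_rpow_of_nonpos (by positivity) ?_ ?_
  · linarith [norm_sq_le_sum_sq ξ]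
  · have : 0 < α + (d : ℝ) / 2 := by positivity
    linarith

section ExpSum

variable {d : ℕ} {ι : Type*} [Fintype ι]

theorem continuous_expSum (v : ι → ℝ) (y : ι → Fin d → ℝ) : Continuous (expSum v y) := by
  unfold expSum dotProduct
  fun_prop

theorem norm_expSum_le (v : ι → ℝ) (y : ι → Fin d → ℝ) (ξ : Fin d → ℝ) :
    ‖expSum v y ξ‖ ≤ ∑ i, |v i| := by
  refine (norm_sum_le _ _).trans_eq (Finset.sum_congr rfl fun i _ => ?_)
  rw [norm_mul, Complex.norm_exp_ofReal_mul_I, mul_one, Complex.norm_real, Real.norm_eq_abs]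

theorem norm_expSum_sq (v : ι → ℝ) (y : ι → Fin d → ℝ) (ξ : Fin d → ℝ) :
    ‖expSum v y ξ‖ ^ 2 = ∑ i, ∑ j, v i * v j * Real.cos ((y i - y j) ⬝ᵥ ξ) := by
  have hre : (expSum v y ξ).re = ∑ i, v i * Real.cos (y i ⬝ᵥ ξ) := by
    simp [expSum, Complex.exp_ofReal_mul_I_re]
  have him : (expSum v y ξ).im = ∑ i, v i * Real.sin (y i ⬝ᵥ ξ) := by
    simp [expSum, Complex.exp_ofReal_mul_I_im]
  rw [← Complex.normSq_eq_norm_sq, Complex.normSq_apply, hre, him, Finset.sum_mul_sum,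
    Finset.sum_mul_sum, ← Finset.sum_add_distrib]
  refine Finset.sum_congr rfl fun i _ => ?_
  rw [← Finset.sum_add_distrib]
  refine Finset.sum_congr rfl fun j _ => ?_
  rw [sub_dotProduct, Real.cos_sub]
  ring

theorem integrable_norm_expSum_sq_mul {α : ℝ} (hα : 0 < α) (v : ι → ℝ) (y : ι → Fin d → ℝ) :
    Integrable fun ξ => ‖expSum v y ξ‖ ^ 2 * maternWeight α d ξ := by
  refine (integrable_maternWeight hα d).bdd_mul (c := (∑ i, |v i|) ^ 2)
    ((continuous_expSum v y).norm.pow 2).aestronglyMeasurable (.of_forall fun ξ => ?_)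
  rw [norm_pow, norm_norm]
  gcongr
  exact norm_expSum_le v y ξ

theorem maternQuad_eq_integral {α : ℝ} (hα : 0 < α) (v : ι → ℝ) (y : ι → Fin d → ℝ) :
    maternQuad α d v y = ∫ ξ, ‖expSum v y ξ‖ ^ 2 * maternWeight α d ξ := by
  have hterm (i j : ι) : Integrable fun ξ : Fin d → ℝ =>
      v i * v j * (Real.cos ((y i - y j) ⬝ᵥ ξ) * maternWeight α d ξ) := by
    refine Integrable.const_mul ?_ _
    refine (integrable_maternWeight hα d).bdd_mul (c := 1) ?_ (.of_forall fun ξ => ?_)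
    · refine Continuous.aestronglyMeasurable ?_
      unfold dotProduct
      fun_prop
    · exact Real.abs_cos_le_one _
  calc maternQuad α d v y
      = ∑ i, ∑ j, ∫ ξ, v i * v j * (Real.cos ((y i - y j) ⬝ᵥ ξ) * maternWeight α d ξ) := by
        simp only [integral_const_mul]
        rfl
    _ = ∫ ξ, ∑ i, ∑ j, v i * v j * (Real.cos ((y i - y j) ⬝ᵥ ξ) * maternWeight α d ξ) := by
        rw [integral_finsetSum _ fun i _ => integrable_finsetSum _ fun j _ => hterm i j]
        refine Finset.sum_congr rfl fun i _ => ?_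
        rw [integral_finsetSum _ fun j _ => hterm i j]
    _ = _ := by
        refine integral_congr_ae (.of_forall fun ξ => ?_)
        simp only [norm_expSum_sq, Finset.sum_mul, mul_assoc]

theorem maternQuad_nonneg {α : ℝ} (hα : 0 < α) (v : ι → ℝ) (y : ι → Fin d → ℝ) :
    0 ≤ maternQuad α d v y := by
  rw [maternQuad_eq_integral hα]
  exact integral_nonneg fun ξ => mul_nonneg (sq_nonneg _) (maternWeight_pos α ξ).le

/-- Functions with a square integrable weighted Fourier transform are bounded on finitely
supported functionals by the Matérn quadratic form. -/
theorem sq_sum_le_maternQuad {α : ℝ} (hα : 0 < α) {F : (Fin d → ℝ) → ℂ} (hF : Integrable F)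
    (hF2 : Integrable fun ξ => ‖F ξ‖ ^ 2 / maternWeight α d ξ) {φ : (Fin d → ℝ) → ℝ}
    (hφ : ∀ y, (φ y : ℂ) = ∫ ξ, Complex.exp ((y ⬝ᵥ ξ : ℝ) * Complex.I) * F ξ)
    (v : ι → ℝ) (y : ι → Fin d → ℝ) :
    (∑ i, v i * φ (y i)) ^ 2 ≤ (∫ ξ, ‖F ξ‖ ^ 2 / maternWeight α d ξ) * maternQuad α d v y := by
  set N := ∫ ξ, ‖F ξ‖ ^ 2 / maternWeight α d ξ
  set Q := maternQuad α d v y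
  set J := ∫ ξ, ‖F ξ‖ * ‖expSum v y ξ‖ with hJ
  have hterm (i : ι) : Integrable fun ξ =>
      (v i : ℂ) * (Complex.exp ((y i ⬝ᵥ ξ : ℝ) * Complex.I) * F ξ) := by
    refine Integrable.const_mul (hF.bdd_mul (c := 1) ?_ (.of_forall fun ξ => ?_)) _
    · refine Continuous.aestronglyMeasurable ?_
      unfold dotProduct
      fun_prop
    · exact (Complex.norm_exp_ofReal_mul_I _).le
  have hsum : ((∑ i, v i * φ (y i) : ℝ) : ℂ) = ∫ ξ, expSum v y ξ * F ξ := by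
    push_cast
    simp only [hφ, ← integral_const_mul]
    rw [← integral_finsetSum _ fun i _ => hterm i]
    simp only [expSum, Finset.sum_mul, mul_assoc]
  have hle : |∑ i, v i * φ (y i)| ≤ J := by
    rw [← Real.norm_eq_abs, ← Complex.norm_real, hsum]
    refine (norm_integral_le_integral_norm _).trans_eq ?_
    simp only [norm_mul, hJ, mul_comm]
  have hJint : Integrable fun ξ => ‖F ξ‖ * ‖expSum v y ξ‖ := by
    refine hF.norm.mul_bdd (c := ∑ i, |v i|) (continuous_expSum v y).norm.aestronglyMeasurable
      (.of_forall fun ξ => ?_)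
    rw [norm_norm]
    exact norm_expSum_le v y ξ
  have hQint := integrable_norm_expSum_sq_mul hα v y
  have key (t : ℝ) : 0 ≤ Q * (t * t) + (-2 * J) * t + N := by
    have h : (0 : ℝ) ≤ ∫ ξ, ((t * t) * (‖expSum v y ξ‖ ^ 2 * maternWeight α d ξ)
        + (-2 * t) * (‖F ξ‖ * ‖expSum v y ξ‖) + ‖F ξ‖ ^ 2 / maternWeight α d ξ) := by
      refine integral_nonneg fun ξ => ?_
      have hw := maternWeight_pos α ξ
      have : (t * t) * (‖expSum v y ξ‖ ^ 2 * maternWeight α d ξ)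
          + (-2 * t) * (‖F ξ‖ * ‖expSum v y ξ‖) + ‖F ξ‖ ^ 2 / maternWeight α d ξ
          = (t * ‖expSum v y ξ‖ * maternWeight α d ξ - ‖F ξ‖) ^ 2 / maternWeight α d ξ := by
        field_simp
        ring
      simp only [this, Pi.zero_apply]
      positivity
    have hadd : Integrable fun ξ => (t * t) * (‖expSum v y ξ‖ ^ 2 * maternWeight α d ξ)
        + (-2 * t) * (‖F ξ‖ * ‖expSum v y ξ‖) := (hQint.const_mul _).add (hJint.const_mul _)
    rw [integral_add hadd hF2,
      integral_add (hQint.const_mul _) (hJint.const_mul _), integral_const_mul,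
      integral_const_mul, ← maternQuad_eq_integral hα] at h
    linarith
  have hd := discrim_le_zero key
  rw [discrim] at hd
  calc (∑ i, v i * φ (y i)) ^ 2 = |∑ i, v i * φ (y i)| ^ 2 := (sq_abs _).symm
    _ ≤ J ^ 2 := by gcongr
    _ ≤ N * Q := by linarith

end ExpSum

theorem integrable_schwartz_sq_div_maternWeight {α : ℝ} (hα : 0 < α) {d : ℕ}
    (G : SchwartzMap (EuclideanSpace ℝ (Fin d)) ℂ) :
    Integrable fun ξ : Fin d → ℝ => ‖G (WithLp.toLp 2 ξ)‖ ^ 2 / maternWeight α d ξ := by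
  have hp : 0 < α + (d : ℝ) / 2 := by positivity
  have hGint : Integrable fun ξ : Fin d → ℝ => G (WithLp.toLp 2 ξ) :=
    (PiLp.volume_preserving_toLp (Fin d)).integrable_comp_of_integrable G.integrable
  obtain ⟨n, hn⟩ := exists_nat_ge (2 * (α + (d : ℝ) / 2))
  set M := 2 ^ n * (Finset.Iic (n, 0)).sup (fun m => SchwartzMap.seminorm ℝ m.1 m.2) G
  have hM (x : EuclideanSpace ℝ (Fin d)) : (1 + ‖x‖) ^ n * ‖G x‖ ≤ M := by
    simpa using SchwartzMap.one_add_le_sup_seminorm_apply (𝕜 := ℝ) (m := (n, 0)) le_rfl le_rfl G x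
  refine (hGint.norm.const_mul M).mono' ?_ (.of_forall fun ξ => ?_)
  · refine Continuous.aestronglyMeasurable ?_
    refine Continuous.div ?_ (continuous_maternWeight α d) fun ξ => (maternWeight_pos α ξ).ne'
    exact ((G.continuous.comp (PiLp.continuous_toLp 2 _)).norm).pow 2
  · have hw := maternWeight_pos α ξ
    rw [Real.norm_of_nonneg (by positivity)]
    set x : EuclideanSpace ℝ (Fin d) := WithLp.toLp 2 ξ
    have hx : ∑ j, ξ j ^ 2 = ‖x‖ ^ 2 := by
      rw [EuclideanSpace.norm_sq_eq]
      simp [x]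
    have hweight : (maternWeight α d ξ)⁻¹ ≤ (1 + ‖x‖) ^ n := by
      rw [maternWeight, Real.rpow_neg (by rw [hx]; positivity), inv_inv, hx]
      calc (1 + ‖x‖ ^ 2) ^ (α + (d : ℝ) / 2) ≤ ((1 + ‖x‖) ^ 2) ^ (α + (d : ℝ) / 2) := by
            gcongr
            nlinarith [norm_nonneg x]
        _ = (1 + ‖x‖) ^ (2 * (α + (d : ℝ) / 2)) := by
            rw [← Real.rpow_natCast, ← Real.rpow_mul (by positivity)]
            norm_num
        _ ≤ (1 + ‖x‖) ^ (n : ℝ) :=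
            Real.rpow_le_rpow_of_exponent_le (by linarith [norm_nonneg x]) hn
        _ = _ := Real.rpow_natCast _ _
    calc ‖G x‖ ^ 2 / maternWeight α d ξ = (maternWeight α d ξ)⁻¹ * ‖G x‖ * ‖G x‖ := by
          field_simp
      _ ≤ (1 + ‖x‖) ^ n * ‖G x‖ * ‖G x‖ := by gcongr
      _ ≤ M * ‖G x‖ := by gcongr; exact hM x

open scoped FourierTransform in
/-- Bump functions of arbitrary radii belong to the native space of the Matérn kernel. -/
theorem exists_bump_sq_sum_le_maternQuad {α : ℝ} (hα : 0 < α) (d : ℕ) {a b : ℝ} (ha : 0 < a)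
    (hab : a < b) :
    ∃ φ : (Fin d → ℝ) → ℝ, ∃ N : ℝ, 0 ≤ N ∧ (∀ y, ‖y‖ ≤ a → φ y = 1) ∧
      (∀ y, b ≤ ‖y‖ → φ y = 0) ∧
      ∀ (ι : Type) [Fintype ι] (v : ι → ℝ) (y : ι → Fin d → ℝ),
        (∑ i, v i * φ (y i)) ^ 2 ≤ N * maternQuad α d v y := by
  have hpi : (0 : ℝ) < 2 * Real.pi := by positivity
  let f : ContDiffBump (0 : Fin d → ℝ) :=
    ⟨a / (2 * Real.pi), b / (2 * Real.pi), by positivity, by gcongr⟩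
  let e : EuclideanSpace ℝ (Fin d) ≃L[ℝ] (Fin d → ℝ) := EuclideanSpace.equiv (Fin d) ℝ
  let g : EuclideanSpace ℝ (Fin d) → ℂ := fun x => (f (e x) : ℂ)
  have hgc : HasCompactSupport g :=
    (f.hasCompactSupport.comp_homeomorph e.toHomeomorph).comp_left (g := fun t : ℝ => (t : ℂ)) rfl
  have hgd : ContDiff ℝ ((⊤ : ℕ∞) : WithTop ℕ∞) g :=
    Complex.ofRealCLM.contDiff.comp (f.contDiff.comp e.contDiff)
  let S : SchwartzMap (EuclideanSpace ℝ (Fin d)) ℂ := hgc.toSchwartzMap hgd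
  let φ : (Fin d → ℝ) → ℝ := fun y => f ((2 * Real.pi)⁻¹ • y)
  have hnorm (y : Fin d → ℝ) : ‖(2 * Real.pi)⁻¹ • y‖ = ‖y‖ / (2 * Real.pi) := by
    rw [norm_smul, Real.norm_of_nonneg (by positivity)]
    ring
  let F : (Fin d → ℝ) → ℂ := fun ξ => (𝓕 S) (WithLp.toLp 2 ξ)
  have hF : Integrable F :=
    (PiLp.volume_preserving_toLp (Fin d)).integrable_comp_of_integrable (𝓕 S).integrable
  have hφ (y : Fin d → ℝ) :
      (φ y : ℂ) = ∫ ξ, Complex.exp ((y ⬝ᵥ ξ : ℝ) * Complex.I) * F ξ := by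
    let x : EuclideanSpace ℝ (Fin d) := WithLp.toLp 2 ((2 * Real.pi)⁻¹ • y)
    have h1 : (φ y : ℂ) = S x := rfl
    have h3 : 𝓕⁻ (𝓕 S : SchwartzMap (EuclideanSpace ℝ (Fin d)) ℂ) = S :=
      FourierTransform.fourierInv_fourier_eq S
    rw [h1, ← h3, SchwartzMap.fourierInv_coe,
      Real.fourierInv_eq', ← (PiLp.volume_preserving_toLp (Fin d)).integral_comp
        (MeasurableEquiv.toLp 2 (Fin d → ℝ)).measurableEmbedding]
    refine integral_congr_ae (.of_forall fun ξ => ?_)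
    have h2 : 2 * Real.pi * inner ℝ (WithLp.toLp 2 ξ : EuclideanSpace ℝ (Fin d)) x = y ⬝ᵥ ξ := by
      rw [EuclideanSpace.inner_eq_star_dotProduct]
      simp only [x, star_trivial, smul_dotProduct, smul_eq_mul]
      field_simp
    simp only [h2, smul_eq_mul, F]
  refine ⟨φ, _, integral_nonneg fun ξ => ?_, fun y hy => ?_, fun y hy => ?_,
    fun ι _ v y => sq_sum_le_maternQuad hα hF
      (integrable_schwartz_sq_div_maternWeight hα (𝓕 S)) hφ v y⟩
  · have := maternWeight_pos α ξ
    simp only [Pi.zero_apply]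
    positivity
  · refine f.one_of_mem_closedBall ?_
    rw [mem_closedBall_zero_iff, hnorm]
    exact div_le_div_of_nonneg_right hy hpi.le
  · refine f.zero_of_le_dist ?_
    rw [dist_zero_right, hnorm]
    exact div_le_div_of_nonneg_right hy hpi.le

theorem integrable_min_one_norm_pow_mul_rpow {α : ℝ} (hα : 0 < α) {n : ℕ} (hn : α < n) {d : ℕ}
    (hd : 1 ≤ d) :
    Integrable fun η : Fin d → ℝ => min 1 (‖η‖ ^ (2 * n)) * ‖η‖ ^ (-(2 * α + d)) := by
  have : Nonempty (Fin d) := ⟨⟨0, hd⟩⟩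
  rw [integrable_fun_norm_addHaar (volume : Measure (Fin d → ℝ))
    (f := fun t : ℝ => min 1 (t ^ (2 * n)) * t ^ (-(2 * α + (d : ℝ))))]
  have hpow {t : ℝ} (ht : 0 < t) :
      t ^ (Module.finrank ℝ (Fin d → ℝ) - 1) * t ^ (-(2 * α + (d : ℝ))) = t ^ (-2 * α - 1) := by
    rw [← Real.rpow_natCast, ← Real.rpow_add ht, Module.finrank_fin_fun, Nat.cast_sub hd]
    congr 1
    push_cast
    ring
  rw [← Set.Ioc_union_Ioi_eq_Ioi zero_le_one, integrableOn_union]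
  constructor
  · have h : IntegrableOn (fun t : ℝ => t ^ (2 * (n : ℝ) - 2 * α - 1)) (Set.Ioc 0 1) := by
      rw [integrableOn_Ioc_iff_integrableOn_Ioo, intervalIntegral.integrableOn_Ioo_rpow_iff one_pos]
      linarith
    refine h.congr_fun (fun t ht => ?_) measurableSet_Ioc
    have h1 : t ^ (2 * n) ≤ 1 := pow_le_one₀ ht.1.le ht.2
    simp only [min_eq_right h1, smul_eq_mul]
    rw [mul_left_comm, hpow ht.1, ← Real.rpow_natCast, ← Real.rpow_add ht.1]
    congr 1
    push_cast
    ring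
  · have h : IntegrableOn (fun t : ℝ => t ^ (-2 * α - 1)) (Set.Ioi 1) :=
      integrableOn_Ioi_rpow_of_lt (by linarith) one_pos
    refine h.congr_fun (fun t ht => ?_) measurableSet_Ioi
    have ht' : (1 : ℝ) < t := ht
    have h1 : 1 ≤ t ^ (2 * n) := one_le_pow₀ ht'.le
    simp only [min_eq_left h1, smul_eq_mul, one_mul]
    exact (hpow (by linarith)).symm

/-- If the exponential sum vanishes to order `n > α` at the origin on the scale `R⁻¹`, then the
Matérn quadratic form is of order `R ^ (2 * α)`. -/
theorem exists_maternQuad_le {α : ℝ} (hα : 0 < α) {n : ℕ} (hn : α < n) {d : ℕ} (hd : 1 ≤ d) :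
    ∃ I : ℝ, 0 ≤ I ∧ ∀ (ι : Type) [Fintype ι] (v : ι → ℝ) (y : ι → Fin d → ℝ) (B R : ℝ),
      0 ≤ B → 0 < R → (∀ ξ, ‖expSum v y ξ‖ ^ 2 ≤ B * min 1 ((R * ‖ξ‖) ^ (2 * n))) →
      maternQuad α d v y ≤ B * I * R ^ (2 * α) := by
  set H : (Fin d → ℝ) → ℝ := fun η => min 1 (‖η‖ ^ (2 * n)) * ‖η‖ ^ (-(2 * α + d)) with hH
  have hHint : Integrable H := integrable_min_one_norm_pow_mul_rpow hα hn hd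
  have hn0 : n ≠ 0 := by
    rintro rfl
    simp at hn
    linarith
  refine ⟨∫ η, H η, integral_nonneg fun η => by simp only [hH, Pi.zero_apply]; positivity,
    fun ι _ v y B R hB hR hE => ?_⟩
  have hpt (ξ : Fin d → ℝ) : ‖expSum v y ξ‖ ^ 2 * maternWeight α d ξ ≤
      B * R ^ (2 * α + d) * H (R • ξ) := by
    have hRn : ‖R • ξ‖ = R * ‖ξ‖ := by rw [norm_smul, Real.norm_of_nonneg hR.le]
    rcases eq_or_ne ξ 0 with rfl | hξ
    · have h0 : ‖expSum v y 0‖ ^ 2 ≤ 0 := by simpa [hn0] using hE 0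
      have h1 : ‖expSum v y 0‖ ^ 2 = 0 := le_antisymm h0 (sq_nonneg _)
      rw [h1, zero_mul]
      simp only [hH]
      positivity
    · have hpos : 0 < ‖ξ‖ := norm_pos_iff.2 hξ
      have hw : maternWeight α d ξ ≤ ‖ξ‖ ^ (-(2 * α + d)) := by
        calc maternWeight α d ξ ≤ (‖ξ‖ ^ 2) ^ (-(α + (d : ℝ) / 2)) := by
              refine Real.rpow_le_rpow_of_nonpos (by positivity) ?_ ?_
              · linarith [norm_sq_le_sum_sq ξ]
              · have : 0 < α + (d : ℝ) / 2 := by positivity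
                linarith
          _ = _ := by
              rw [← Real.rpow_natCast, ← Real.rpow_mul hpos.le]
              congr 1
              push_cast
              ring
      calc ‖expSum v y ξ‖ ^ 2 * maternWeight α d ξ
          ≤ (B * min 1 ((R * ‖ξ‖) ^ (2 * n))) * ‖ξ‖ ^ (-(2 * α + d)) :=
            mul_le_mul (hE ξ) hw (maternWeight_pos α ξ).le (by positivity)
        _ = B * (R ^ (2 * α + d) * R ^ (-(2 * α + d))) * min 1 ((R * ‖ξ‖) ^ (2 * n))
              * ‖ξ‖ ^ (-(2 * α + d)) := by
            rw [← Real.rpow_add hR, add_neg_cancel, Real.rpow_zero, mul_one]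
        _ = _ := by
            simp only [hH, hRn]
            rw [Real.mul_rpow hR.le hpos.le]
            ring
  rw [maternQuad_eq_integral hα]
  calc ∫ ξ, ‖expSum v y ξ‖ ^ 2 * maternWeight α d ξ
      ≤ ∫ ξ, B * R ^ (2 * α + d) * H (R • ξ) :=
        integral_mono (integrable_norm_expSum_sq_mul hα v y)
          ((hHint.comp_smul hR.ne').const_mul _) hpt
    _ = B * (∫ η, H η) * R ^ (2 * α) := by
        rw [integral_const_mul, Measure.integral_comp_smul_of_nonneg _ _ _ (hR := hR.le),
          Module.finrank_fin_fun, Real.rpow_add hR, Real.rpow_natCast, smul_eq_mul]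
        field_simp

/-- A norming set admits bounded weights reproducing point evaluation of polynomials. -/
theorem IsNorming.exists_weights {d l m : ℕ} {Ω : Set (Fin d → ℝ)} {w : Fin m → Fin d → ℝ} {c : ℝ}
    (h : IsNorming l Ω w c) (hc : 0 ≤ c) {x : Fin d → ℝ} (hx : x ∈ Ω) :
    ∃ u : Fin m → ℝ, (∀ i, |u i| ≤ c) ∧ ∀ P : MvPolynomial (Fin d) ℝ, P.totalDegree ≤ l →
      ∑ i, u i * MvPolynomial.eval (w i) P = MvPolynomial.eval x P := by
  let V := MvPolynomial.restrictTotalDegree (Fin d) ℝ l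
  let evalAt (y : Fin d → ℝ) : V →ₗ[ℝ] ℝ := (MvPolynomial.aeval y).toLinearMap ∘ₗ V.subtype
  have hevalAt (y : Fin d → ℝ) (P : V) : evalAt y P = MvPolynomial.eval y P.1 := by
    simp [evalAt, MvPolynomial.aeval_eq_eval]
  let E : V →ₗ[ℝ] (Fin m → ℝ) := LinearMap.pi fun i => evalAt (w i)
  have hbound (P : V) : |evalAt x P| ≤ c * ‖E P‖ := by
    rw [hevalAt]
    refine (h P.1 ((MvPolynomial.mem_restrictTotalDegree _ _ _).1 P.2) x hx).trans ?_
    gcongr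
    refine Real.iSup_le (fun i => ?_) (norm_nonneg _)
    rw [← hevalAt]
    exact norm_le_pi_norm (E P) i
  have hmem : evalAt x ∈ LinearMap.range E.dualMap := by
    rw [LinearMap.range_dualMap_eq_dualAnnihilator_ker, Submodule.mem_dualAnnihilator]
    intro P hP
    have h0 := hbound P
    rw [LinearMap.mem_ker.1 hP, norm_zero, mul_zero] at h0
    exact abs_nonpos_iff.1 h0
  obtain ⟨f, hf⟩ := hmem
  have hfE (P : V) : f (E P) = evalAt x P := LinearMap.congr_fun hf P
  let f' : StrongDual ℝ (LinearMap.range E) :=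
    (f.domRestrict (LinearMap.range E)).mkContinuous c (by
      rintro ⟨_, P, rfl⟩
      simp only [LinearMap.domRestrict_apply, hfE]
      exact hbound P)
  obtain ⟨g, hg, hgn⟩ := exists_extension_norm_eq (LinearMap.range E) f'
  have hgc : ‖g‖ ≤ c := hgn ▸ LinearMap.mkContinuous_norm_le _ hc _
  refine ⟨fun i => g (Pi.single i 1), fun i => ?_, fun P hP => ?_⟩
  · calc |g (Pi.single i 1)| ≤ ‖g‖ * ‖(Pi.single i 1 : Fin m → ℝ)‖ := g.le_opNorm _
      _ ≤ c := by rwa [Pi.norm_single, norm_one, mul_one]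
  · let P' : V := ⟨P, (MvPolynomial.mem_restrictTotalDegree _ _ _).2 hP⟩
    have h1 : g (E P') = MvPolynomial.eval x P := by
      have h2 := hg ⟨E P', P', rfl⟩
      rw [h2, ← hevalAt x P', ← hfE]
      rfl
    rw [← h1, ← LinearMap.sum_single_apply (fun _ : Fin m => ℝ) (E P'), map_sum]
    refine Finset.sum_congr rfl fun i _ => ?_
    have h3 : (Pi.single i (E P' i) : Fin m → ℝ) = E P' i • Pi.single i 1 := by
      rw [← Pi.single_smul, smul_eq_mul, mul_one]
    have h4 : E P' i = MvPolynomial.eval (w i) P := hevalAt (w i) P'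
    rw [h3, map_smul, smul_eq_mul, h4, mul_comm]

theorem totalDegree_affine_pow_le {d : ℕ} (z ξ : Fin d → ℝ) (k : ℕ) :
    ((∑ t, (MvPolynomial.X t - MvPolynomial.C (z t)) * MvPolynomial.C (ξ t)) ^ k :
      MvPolynomial (Fin d) ℝ).totalDegree ≤ k := by
  refine (MvPolynomial.totalDegree_pow _ _).trans ?_
  have h : (∑ t, (MvPolynomial.X t - MvPolynomial.C (z t)) * MvPolynomial.C (ξ t) :
      MvPolynomial (Fin d) ℝ).totalDegree ≤ 1 := by
    refine MvPolynomial.totalDegree_finsetSum_le fun t _ => ?_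
    refine (MvPolynomial.totalDegree_mul _ _).trans ?_
    rw [MvPolynomial.totalDegree_C, add_zero]
    exact (MvPolynomial.totalDegree_sub_C_le _ _).trans (MvPolynomial.totalDegree_X _).le
  calc k * _ ≤ k * 1 := Nat.mul_le_mul_left k h
    _ = k := mul_one k

theorem abs_dotProduct_le {d : ℕ} (y ξ : Fin d → ℝ) : |y ⬝ᵥ ξ| ≤ d * ‖y‖ * ‖ξ‖ := by
  calc |y ⬝ᵥ ξ| ≤ ∑ t, |y t * ξ t| := Finset.abs_sum_le_sum_abs _ _
    _ ≤ ∑ _t : Fin d, ‖y‖ * ‖ξ‖ := by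
        refine Finset.sum_le_sum fun t _ => ?_
        rw [abs_mul]
        gcongr
        · exact norm_le_pi_norm y t
        · exact norm_le_pi_norm ξ t
    _ = d * ‖y‖ * ‖ξ‖ := by simp [mul_assoc]

/-- Vanishing moments of order less than `n` make the exponential sum of order `n` at `0`. -/
theorem norm_expSum_sq_le_of_moments {d : ℕ} {ι : Type*} [Fintype ι] {v : ι → ℝ}
    {y : ι → Fin d → ℝ} {n : ℕ} (hn : n ≠ 0) {ρ M : ℝ} (hy : ∀ i, ‖y i‖ ≤ ρ)
    (hM : ∑ i, |v i| ≤ M) (hρ : 0 ≤ ρ) (ξ : Fin d → ℝ)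
    (hmom : ∀ k < n, ∑ i, v i * (y i ⬝ᵥ ξ) ^ k = 0) :
    ‖expSum v y ξ‖ ^ 2 ≤ (2 * M) ^ 2 * min 1 ((d * ρ * ‖ξ‖) ^ (2 * n)) := by
  set T := d * ρ * ‖ξ‖ with hT
  have hT0 : 0 ≤ T := by positivity
  have hM0 : 0 ≤ M := (Finset.sum_nonneg fun i _ => abs_nonneg (v i)).trans hM
  have ht (i : ι) : |y i ⬝ᵥ ξ| ≤ T := by
    refine (abs_dotProduct_le _ _).trans ?_
    have := hy i
    rw [hT]
    gcongr
  have htriv : ‖expSum v y ξ‖ ≤ M := (norm_expSum_le v y ξ).trans hM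
  rcases le_total T 1 with h1 | h1
  · rw [min_eq_right (pow_le_one₀ hT0 h1), mul_comm 2 n, pow_mul, ← mul_pow]
    gcongr
    have hsum : expSum v y ξ = ∑ i, (v i : ℂ) * (Complex.exp ((y i ⬝ᵥ ξ : ℝ) * Complex.I)
        - ∑ k ∈ Finset.range n, ((y i ⬝ᵥ ξ : ℝ) * Complex.I) ^ k / k.factorial) := by
      have hz : ∑ i, (v i : ℂ) *
          ∑ k ∈ Finset.range n, ((y i ⬝ᵥ ξ : ℝ) * Complex.I) ^ k / k.factorial = 0 := by
        simp only [Finset.mul_sum]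
        rw [Finset.sum_comm]
        refine Finset.sum_eq_zero fun k hk => ?_
        have hm : ((∑ i, v i * (y i ⬝ᵥ ξ) ^ k : ℝ) : ℂ) = 0 := by
          rw [hmom k (Finset.mem_range.1 hk), Complex.ofReal_zero]
        push_cast at hm
        calc ∑ i, (v i : ℂ) * (((y i ⬝ᵥ ξ : ℝ) * Complex.I) ^ k / k.factorial)
            = (∑ i, (v i : ℂ) * ((y i ⬝ᵥ ξ : ℝ) : ℂ) ^ k) * (Complex.I ^ k / k.factorial) := by
              rw [Finset.sum_mul]
              refine Finset.sum_congr rfl fun i _ => ?_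
              ring
          _ = 0 := by rw [hm, zero_mul]
      simp only [mul_sub, Finset.sum_sub_distrib, hz, sub_zero, expSum]
    have hconst : ((n.succ : ℝ) * (n.factorial * n : ℝ)⁻¹) ≤ 2 := by
      have hn1 : (1 : ℝ) ≤ n := by exact_mod_cast Nat.one_le_iff_ne_zero.2 hn
      have hf1 : (1 : ℝ) ≤ n.factorial := by
        exact_mod_cast Nat.one_le_iff_ne_zero.2 n.factorial_ne_zero
      rw [← div_eq_mul_inv, div_le_iff₀ (by positivity)]
      push_cast
      nlinarith
    rw [hsum]
    calc _ ≤ ∑ i, |v i| * (T ^ n * 2) := by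
          refine (norm_sum_le _ _).trans (Finset.sum_le_sum fun i _ => ?_)
          rw [norm_mul, Complex.norm_real, Real.norm_eq_abs]
          have hnorm : ‖((y i ⬝ᵥ ξ : ℝ) * Complex.I : ℂ)‖ = |y i ⬝ᵥ ξ| := by simp
          refine mul_le_mul_of_nonneg_left ?_ (abs_nonneg _)
          refine (Complex.exp_bound (by rw [hnorm]; exact (ht i).trans h1)
            (Nat.pos_of_ne_zero hn)).trans ?_
          rw [hnorm]
          have := ht i
          gcongr
      _ = (∑ i, |v i|) * (T ^ n * 2) := by rw [Finset.sum_mul]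
      _ ≤ M * (T ^ n * 2) := by gcongr
      _ = 2 * M * T ^ n := by ring
  · rw [min_eq_left (one_le_pow₀ h1), mul_one]
    gcongr
    linarith

theorem maternQuad_sub_const (α : ℝ) {d : ℕ} {ι : Type*} [Fintype ι] (v : ι → ℝ)
    (y : ι → Fin d → ℝ) (z : Fin d → ℝ) :
    maternQuad α d v (fun i => y i - z) = maternQuad α d v y := by
  simp only [maternQuad, sub_sub_sub_cancel_right]

theorem matern_neg (α : ℝ) {d : ℕ} (x : Fin d → ℝ) : matern α d (-x) = matern α d x := by
  simp only [matern, Pi.neg_apply, neg_mul, Finset.sum_neg_distrib, Real.cos_neg]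

theorem maternQuad_eq_dotProduct (α : ℝ) {d m : ℕ} (v : Fin m → ℝ) (y : Fin m → Fin d → ℝ) :
    maternQuad α d v y = v ⬝ᵥ (maternMat α d y *ᵥ v) := by
  simp only [maternQuad, dotProduct, mulVec, maternMat, of_apply, Finset.mul_sum]
  refine Finset.sum_congr rfl fun i _ => Finset.sum_congr rfl fun j _ => ?_
  ring

/-- The points `x, y_1, …, y_m`. -/
def consPoint {d m : ℕ} (x : Fin d → ℝ) (y : Fin m → Fin d → ℝ) : Option (Fin m) → Fin d → ℝ :=
  fun o => o.elim x y

/-- The weights `1, -u_1, …, -u_m` of the interpolation error functional. -/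
def errWeight {m : ℕ} (u : Fin m → ℝ) : Option (Fin m) → ℝ :=
  fun o => o.elim 1 fun i => -u i

theorem maternQuad_errWeight (α : ℝ) {d m : ℕ} (u : Fin m → ℝ) (x : Fin d → ℝ)
    (y : Fin m → Fin d → ℝ) :
    maternQuad α d (errWeight u) (consPoint x y) =
      matern α d 0 - 2 * (u ⬝ᵥ maternVec α d y x) + u ⬝ᵥ (maternMat α d y *ᵥ u) := by
  have hsymm (i : Fin m) : matern α d (x - y i) = maternVec α d y x i := by
    rw [maternVec, ← matern_neg, neg_sub]
  rw [← maternQuad_eq_dotProduct]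
  simp only [maternQuad, Fintype.sum_option, errWeight, consPoint, Option.elim, hsymm, sub_self,
    dotProduct, Finset.sum_add_distrib]
  have h (i : Fin m) : matern α d (y i - x) = maternVec α d y x i := rfl
  simp only [h, neg_mul, mul_neg, one_mul, mul_one, neg_neg, Finset.sum_neg_distrib]
  ring

theorem maternMat_transpose (α : ℝ) {d m : ℕ} (y : Fin m → Fin d → ℝ) :
    (maternMat α d y)ᵀ = maternMat α d y := by
  ext i j
  simp only [maternMat, transpose_apply, of_apply]
  rw [← matern_neg, neg_sub]

/-- The kernel interpolation weights minimize the error functional. -/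
theorem maternQuad_errWeight_le {α : ℝ} (hα : 0 < α) {d m : ℕ} {a : Fin m → ℝ} {x : Fin d → ℝ}
    {y : Fin m → Fin d → ℝ} (ha : maternMat α d y *ᵥ a = maternVec α d y x) (u : Fin m → ℝ) :
    maternQuad α d (errWeight a) (consPoint x y) ≤
      maternQuad α d (errWeight u) (consPoint x y) := by
  have h := maternQuad_nonneg hα (u - a) y
  have hsymm : a ⬝ᵥ (maternMat α d y *ᵥ u) = u ⬝ᵥ (maternMat α d y *ᵥ a) := by
    rw [dotProduct_mulVec, ← mulVec_transpose, maternMat_transpose, dotProduct_comm]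
  rw [maternQuad_eq_dotProduct, mulVec_sub, sub_dotProduct, dotProduct_sub, dotProduct_sub, hsymm,
    ha] at h
  rw [maternQuad_errWeight, maternQuad_errWeight, ha]
  linarith

/-- Each weight at separated points is controlled by the Matérn quadratic form. -/
theorem exists_sq_le_maternQuad_of_separated {α : ℝ} (hα : 0 < α) (d : ℕ) {ρ : ℝ} (hρ : 0 < ρ) :
    ∃ N : ℝ, 0 ≤ N ∧ ∀ (ι : Type) [Fintype ι] (v : ι → ℝ) (y : ι → Fin d → ℝ),
      (∀ i j, i ≠ j → ρ ≤ ‖y i - y j‖) → ∀ i, v i ^ 2 ≤ N * maternQuad α d v y := by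
  obtain ⟨φ, N, hN, hφ1, hφ0, hφ⟩ :=
    exists_bump_sq_sum_le_maternQuad hα d (half_pos hρ) (half_lt_self hρ)
  refine ⟨N, hN, fun ι _ v y hsep i => ?_⟩
  have h := hφ ι v fun j => y j - y i
  rw [maternQuad_sub_const, Finset.sum_eq_single i] at h
  · rwa [sub_self, hφ1 0 (by rw [norm_zero]; positivity), mul_one] at h
  · intro j _ hj
    rw [hφ0 _ (hsep j i hj), mul_zero]
  · simp

theorem isUnit_det_maternMat {α : ℝ} (hα : 0 < α) {d m : ℕ} {ρ : ℝ} (hρ : 0 < ρ)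
    {y : Fin m → Fin d → ℝ} (hsep : ∀ i j, i ≠ j → ρ ≤ ‖y i - y j‖) :
    IsUnit (maternMat α d y).det := by
  obtain ⟨N, -, hN⟩ := exists_sq_le_maternQuad_of_separated hα d hρ
  rw [← Matrix.isUnit_iff_isUnit_det, ← mulVec_injective_iff_isUnit]
  refine (injective_iff_map_eq_zero (maternMat α d y).mulVecLin).2 fun v hv => ?_
  funext i
  have h := hN (Fin m) v y hsep i
  rw [maternQuad_eq_dotProduct, show maternMat α d y *ᵥ v = 0 from hv, dotProduct_zero,
    mul_zero] at h
  exact pow_eq_zero_iff two_ne_zero |>.1 (le_antisymm h (sq_nonneg _))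

theorem sum_errWeight {m : ℕ} (u : Fin m → ℝ) : ∑ o, errWeight u o = 1 - ∑ i, u i := by
  simp only [Fintype.sum_option, errWeight, Option.elim, Finset.sum_neg_distrib, sub_eq_add_neg]

theorem sum_abs_errWeight_le {m : ℕ} {u : Fin m → ℝ} {c : ℝ} (hu : ∀ i, |u i| ≤ c) :
    ∑ o, |errWeight u o| ≤ 1 + m * c := by
  simp only [Fintype.sum_option, errWeight, Option.elim, abs_one, abs_neg]
  gcongr
  simpa using Finset.sum_le_card_nsmul Finset.univ (fun i => |u i|) c fun i _ => hu i

/-- The error functional of polynomially exact weights has vanishing moments. -/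
theorem sum_errWeight_mul_pow_eq_zero {d l m : ℕ} {w : Fin m → Fin d → ℝ} {x : Fin d → ℝ}
    {u : Fin m → ℝ} (hu : ∀ P : MvPolynomial (Fin d) ℝ, P.totalDegree ≤ l →
      ∑ i, u i * MvPolynomial.eval (w i) P = MvPolynomial.eval x P)
    (τ : ℝ) (z ξ : Fin d → ℝ) {k : ℕ} (hk : k ≤ l) :
    ∑ o, errWeight u o *
      ((consPoint (τ • x) (fun i => τ • w i) o - τ • z) ⬝ᵥ ξ) ^ k = 0 := by
  have h := hu _ ((totalDegree_affine_pow_le z (τ • ξ) k).trans hk)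
  have heval (y : Fin d → ℝ) : MvPolynomial.eval y
      ((∑ t, (MvPolynomial.X t - MvPolynomial.C (z t)) * MvPolynomial.C ((τ • ξ) t)) ^ k) =
      ((τ • y - τ • z) ⬝ᵥ ξ) ^ k := by
    simp only [map_pow, map_sum, map_mul, map_sub, MvPolynomial.eval_X, MvPolynomial.eval_C,
      dotProduct, Pi.smul_apply, Pi.sub_apply, smul_eq_mul]
    congr 1
    refine Finset.sum_congr rfl fun t _ => ?_
    ring
  simp only [heval] at h
  simp only [Fintype.sum_option, errWeight, consPoint, Option.elim, neg_mul,
    Finset.sum_neg_distrib, h, one_mul, add_neg_cancel]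

theorem norm_smul_sub_smul_le_of_mem_cube {d : ℕ} {z y : Fin d → ℝ} {s τ : ℝ} (hs : 0 ≤ s)
    (hτ : 0 ≤ τ) (hy : y ∈ cube d z s) : ‖τ • y - τ • z‖ ≤ τ * s := by
  rw [← smul_sub, norm_smul, Real.norm_of_nonneg hτ]
  gcongr
  refine (pi_norm_le_iff_of_nonneg hs).2 fun t => ?_
  rw [Pi.sub_apply, Real.norm_eq_abs, abs_le]
  constructor <;> linarith [(hy t).1, (hy t).2]

theorem mul_le_norm_smul_sub_smul {d : ℕ} {x y : Fin d → ℝ} {δ τ : ℝ} (hτ : 0 ≤ τ)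
    (h : ∃ t, δ ≤ |x t - y t|) : τ * δ ≤ ‖τ • x - τ • y‖ := by
  obtain ⟨t, ht⟩ := h
  rw [← smul_sub, norm_smul, Real.norm_of_nonneg hτ]
  gcongr
  exact ht.trans (norm_le_pi_norm (x - y) t)

theorem lt_lbelow_add_one {α : ℝ} (hα : 0 < α) (hnotnat : ¬ IsNatVal α) :
    α < (lbelow α + 1 : ℕ) := by
  have h1 : lbelow α + 1 = ⌈α⌉₊ := Nat.sub_add_cancel (Nat.ceil_pos.2 hα)
  rw [h1]
  exact lt_of_le_of_ne (Nat.le_ceil α) fun h => hnotnat ⟨_, h⟩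

/-- under the geometric hypotheses at scale `L ∈ (0,1]` (with `α ∉ ℕ`),
interpolating a constant `c ∈ [−1,1]` from `τA` to `τx` via the Matérn kernel incurs error at
most `C |c| (τL)^α`. -/
theorem stmt17 (α : ℝ) (hα : 0 < α) (hnotnat : ¬ IsNatVal α) (d : ℕ) (hd : 1 ≤ d)
    (cL cd cN : ℝ) (hcd : 0 < cd) (hcLcd : cd ≤ cL) (hcN : 0 < cN) :
    ∃ C : ℝ, 0 < C ∧
      ∀ L : ℝ, 0 < L → L ≤ 1 → ∀ x : Fin d → ℝ,
        ∀ w : Fin ((lbelow α + d).choose (lbelow α)) → Fin d → ℝ,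
          GeomHyp α d cL cd cN L w x →
          ∀ τ : ℝ, 0 < τ → ∀ c : ℝ, -1 ≤ c → c ≤ 1 →
            IsUnit (maternMat α d (fun i t => τ * w i t)).det ∧
            |c - c * ((fun _ : Fin ((lbelow α + d).choose (lbelow α)) => (1 : ℝ)) ⬝ᵥ
                ((maternMat α d (fun i t => τ * w i t))⁻¹ *ᵥ
                  maternVec α d (fun i t => τ * w i t) (fun t => τ * x t)))| ≤
              C * |c| * (τ * L) ^ α := by
  have hcL : 0 < cL := hcd.trans_le hcLcd
  have hd0 : (0 : ℝ) < d := by exact_mod_cast hd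
  set m := (lbelow α + d).choose (lbelow α)
  obtain ⟨φ, N₁, hN₁, hφ1, -, hφ⟩ := exists_bump_sq_sum_le_maternQuad hα d hcL (lt_add_one cL)
  obtain ⟨N₂, hN₂, hsepN⟩ := exists_sq_le_maternQuad_of_separated hα d hcd
  obtain ⟨I, hI, hquad⟩ := exists_maternQuad_le hα (lt_lbelow_add_one hα hnotnat) hd
  set M : ℝ := 1 + m * cN
  set C₁ : ℝ := √(N₁ * ((2 * M) ^ 2 * I)) * (d * cL) ^ α with hC₁
  set C₂ : ℝ := (m + 1) * √(N₂ * matern α d 0) with hC₂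
  have hC₁0 : 0 ≤ C₁ := by positivity
  have hC₂0 : 0 ≤ C₂ := by positivity
  refine ⟨C₁ + C₂ + 1, by positivity, ?_⟩
  rintro L hL - x w ⟨z, s, hs, hsL, hwc, hxc, hww, hwx, hnorming⟩ τ hτ c - -
  set y : Fin m → Fin d → ℝ := fun i => τ • w i
  change IsUnit (maternMat α d y).det ∧
    |c - c * ((fun _ => (1 : ℝ)) ⬝ᵥ ((maternMat α d y)⁻¹ *ᵥ maternVec α d y (τ • x)))| ≤
      (C₁ + C₂ + 1) * |c| * (τ * L) ^ α
  have hr : 0 < τ * L := by positivity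
  have hsepw (i j) (hij : i ≠ j) : cd * (τ * L) ≤ ‖y i - y j‖ := by
    have := mul_le_norm_smul_sub_smul hτ.le (hww i j hij)
    linarith
  have hsepx (i) : cd * (τ * L) ≤ ‖y i - τ • x‖ := by
    have := mul_le_norm_smul_sub_smul hτ.le (hwx i)
    linarith
  have hunit : IsUnit (maternMat α d y).det := isUnit_det_maternMat hα (by positivity) hsepw
  refine ⟨hunit, ?_⟩
  set a := (maternMat α d y)⁻¹ *ᵥ maternVec α d y (τ • x) with ha_def
  have ha : maternMat α d y *ᵥ a = maternVec α d y (τ • x) := by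
    rw [ha_def, mulVec_mulVec, mul_nonsing_inv _ hunit, one_mulVec]
  set p := consPoint (τ • x) y
  have hmain : |∑ o, errWeight a o| ≤ (C₁ + C₂) * (τ * L) ^ α := by
    rcases le_total (τ * L) 1 with hr1 | hr1
    · obtain ⟨u, huc, hu⟩ := hnorming.exists_weights hcN.le hxc
      have hpz (o) : ‖p o - τ • z‖ ≤ cL * (τ * L) := by
        have hτs : τ * s ≤ cL * (τ * L) := by nlinarith
        cases o with
        | none => exact (norm_smul_sub_smul_le_of_mem_cube hs hτ.le hxc).trans hτs
        | some i => exact (norm_smul_sub_smul_le_of_mem_cube hs hτ.le (hwc i)).trans hτs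
      have h1 := hφ _ (errWeight a) fun o => p o - τ • z
      have h2 (o) : φ (p o - τ • z) = 1 := hφ1 _ ((hpz o).trans (by nlinarith))
      simp only [h2, mul_one, maternQuad_sub_const] at h1
      have h3 := hquad _ (errWeight u) (fun o => p o - τ • z) ((2 * M) ^ 2) (d * (cL * (τ * L)))
        (by positivity) (by positivity) fun ξ =>
          norm_expSum_sq_le_of_moments (Nat.succ_ne_zero _) hpz (sum_abs_errWeight_le huc)
            (by positivity) ξ fun k hk =>
              sum_errWeight_mul_pow_eq_zero hu τ z ξ (Nat.lt_succ_iff.1 hk)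
      rw [maternQuad_sub_const] at h3
      have h4 : (∑ o, errWeight a o) ^ 2 ≤ (C₁ * (τ * L) ^ α) ^ 2 := by
        calc (∑ o, errWeight a o) ^ 2
            ≤ N₁ * ((2 * M) ^ 2 * I * (d * (cL * (τ * L))) ^ (2 * α)) := by
              refine h1.trans ?_
              gcongr
              exact (maternQuad_errWeight_le hα ha u).trans h3
          _ = (C₁ * (τ * L) ^ α) ^ 2 := by
              rw [hC₁, mul_pow (√_ * _), mul_pow √_, Real.sq_sqrt (by positivity),
                ← mul_assoc (d : ℝ), mul_comm 2 α, Real.rpow_mul (by positivity),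
                Real.mul_rpow (by positivity) hr.le, Real.rpow_two]
              ring
      have h5 : |∑ o, errWeight a o| ≤ C₁ * (τ * L) ^ α :=
        abs_le_of_sq_le_sq h4 (by positivity)
      have h6 : 0 ≤ C₂ * (τ * L) ^ α := by positivity
      linarith
    · have hsep (o o') (h : o ≠ o') : cd ≤ ‖p o - p o'‖ := by
        have hcdr : cd ≤ cd * (τ * L) := le_mul_of_one_le_right hcd.le hr1
        refine hcdr.trans ?_
        cases o with
        | none =>
          cases o' with
          | none => exact absurd rfl h
          | some j => rw [norm_sub_rev]; exact hsepx j
        | some i =>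
          cases o' with
          | none => exact hsepx i
          | some j => exact hsepw i j fun hij => h (congrArg some hij)
      have h1 (o) : |errWeight a o| ≤ √(N₂ * matern α d 0) := by
        refine Real.abs_le_sqrt ((hsepN _ (errWeight a) p hsep o).trans ?_)
        gcongr
        refine (maternQuad_errWeight_le hα ha 0).trans_eq ?_
        rw [maternQuad_errWeight]
        simp
      have h2 : |∑ o, errWeight a o| ≤ C₂ := by
        calc |∑ o, errWeight a o| ≤ ∑ o, |errWeight a o| := Finset.abs_sum_le_sum_abs _ _
          _ ≤ ∑ _o : Option (Fin m), √(N₂ * matern α d 0) := Finset.sum_le_sum fun o _ => h1 o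
          _ = C₂ := by simp [hC₂]
      have h3 : 1 ≤ (τ * L) ^ α := Real.one_le_rpow hr1 hα.le
      nlinarith
  rw [sum_errWeight] at hmain
  have hdot : (fun _ => (1 : ℝ)) ⬝ᵥ a = ∑ i, a i := by simp [dotProduct]
  have hrα : 0 ≤ (τ * L) ^ α := by positivity
  calc |c - c * ((fun _ => (1 : ℝ)) ⬝ᵥ a)| = |c| * |1 - ∑ i, a i| := by
        rw [hdot, ← abs_mul, mul_sub, mul_one]
    _ ≤ |c| * ((C₁ + C₂ + 1) * (τ * L) ^ α) := by
        gcongr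
        linarith
    _ = (C₁ + C₂ + 1) * |c| * (τ * L) ^ α := by ring
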